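/- arXiv:1710.03259 — 2 statements merged into one kernel-verified Lean document; each statement's English description precedes it below -/
import Mathlib

section
/- Let E be a real Banach space in which every vector has a unique norming functional, denoted J(v), and suppose E has the Opial-type duality property. Let (S_n) be a sequence of invertible linear isometries of E and let P : E → E be a continuous linear idempotent (P ∘ P = P) such that S_n → P and S_n⁻¹ → P in the weak operator topology. Then every v ∈ ker P is Birkhoff–James orthogonal to every w ∈ range P, and ‖(I − P)x‖ ≤ ‖x‖ for every x ∈ E; in particular, if P ≠ I then the operator norm of I − P equals 1. -/
open Filter Topology

/-!
If `f` norms `v` and `S` is an invertible isometry, then `f ∘ S⁻¹` norms `S v`. Hence, when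
`S i v ⇀ 0`, the duality property gives `f (S i⁻¹ u) → 0` for every `u`. For `v ∈ ker P` and weak
operator limits `S i → P`, `S i⁻¹ → P`, this limit is also `f (P u)`. So a norming functional of `v`
vanishes on `range P`, which forces `v` to be Birkhoff–James orthogonal to `range P`.
-/

section NormingFunctional

variable {𝕜 E F ι : Type*} [RCLike 𝕜] [NormedAddCommGroup E] [NormedSpace 𝕜 E]
  [NormedAddCommGroup F] [NormedSpace 𝕜 F]

variable (𝕜) in
/-- Birkhoff–James orthogonality of `v` to `w`, over the scalar field `𝕜`. -/
def IsBirkhoffOrthogonal (v w : E) : Prop :=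
  ∀ c : 𝕜, ‖v‖ ≤ ‖v + c • w‖

/-- `f` is a norming functional of `v`, normalised as in the duality map: its norm is that of `v`
rather than `1`. -/
structure IsNormingFunctional (f : E →L[𝕜] 𝕜) (v : E) : Prop where
  norm_eq : ‖f‖ = ‖v‖
  apply_self : f v = (‖v‖ : 𝕜) ^ 2

variable (𝕜 E) in
/-- The Opial-type duality property along a filter `l`, which is `atTop` on `ℕ` for sequences.
Norming functionals need not be unique: every choice of them along a weakly null family has to be
weak-* null. -/
def HasOpialDuality (l : Filter ι) : Prop :=
  ∀ (x : ι → E) (f : ι → E →L[𝕜] 𝕜),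
    (∀ g : E →L[𝕜] 𝕜, Tendsto (fun i => g (x i)) l (𝓝 0)) →
    (∀ i, IsNormingFunctional (f i) (x i)) →
    ∀ v : E, Tendsto (fun i => f i v) l (𝓝 0)

variable (𝕜) in
theorem exists_isNormingFunctional (v : E) : ∃ f : E →L[𝕜] 𝕜, IsNormingFunctional f v := by
  rcases eq_or_ne v 0 with rfl | hv
  · exact ⟨0, by simp, by simp⟩
  · obtain ⟨g, hg, hgv⟩ := exists_dual_vector 𝕜 v (norm_ne_zero_iff.mpr hv)
    exact ⟨(‖v‖ : 𝕜) • g, by simp [norm_smul, hg], by simp [hgv, sq]⟩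

namespace IsNormingFunctional

variable {f : E →L[𝕜] 𝕜} {v : E}

theorem comp_symm (hf : IsNormingFunctional f v) (e : E ≃ₗᵢ[𝕜] F) :
    IsNormingFunctional (f.comp (e.symm : F →L[𝕜] E)) (e v) where
  norm_eq := by rw [f.opNorm_comp_linearIsometryEquiv, hf.norm_eq, e.norm_map]
  apply_self := by simp [hf.apply_self]

theorem isBirkhoffOrthogonal (hf : IsNormingFunctional f v) {w : E} (hw : f w = 0) :
    IsBirkhoffOrthogonal 𝕜 v w := by
  intro c
  rcases (norm_nonneg v).eq_or_lt with hv | hv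
  · exact hv ▸ norm_nonneg _
  · refine le_of_mul_le_mul_left ?_ hv
    calc ‖v‖ * ‖v‖ = ‖f (v + c • w)‖ := by simp [hw, hf.apply_self, sq]
      _ ≤ ‖f‖ * ‖v + c • w‖ := f.le_opNorm _
      _ = ‖v‖ * ‖v + c • w‖ := by rw [hf.norm_eq]

theorem apply_eq_zero_of_tendsto {l : Filter ι} [l.NeBot] (hf : IsNormingFunctional f v)
    (hF : HasOpialDuality 𝕜 F l) {S : ι → E ≃ₗᵢ[𝕜] F}
    (hv : ∀ g : F →L[𝕜] 𝕜, Tendsto (fun i => g (S i v)) l (𝓝 0)) {u : F} {w : E}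
    (hw : Tendsto (fun i => f ((S i).symm u)) l (𝓝 (f w))) : f w = 0 :=
  tendsto_nhds_unique hw (hF _ _ hv (fun i => hf.comp_symm (S i)) u)

end IsNormingFunctional

theorem IsBirkhoffOrthogonal.norm_le_norm_add {v w : E} (h : IsBirkhoffOrthogonal 𝕜 v w) :
    ‖v‖ ≤ ‖v + w‖ := by
  simpa only [one_smul] using h 1

theorem HasOpialDuality.isBirkhoffOrthogonal_of_tendsto {l : Filter ι} [l.NeBot]
    (hF : HasOpialDuality 𝕜 F l) {S : ι → E ≃ₗᵢ[𝕜] F} {u : F} {v w : E}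
    (hv : ∀ g : F →L[𝕜] 𝕜, Tendsto (fun i => g (S i v)) l (𝓝 0))
    (hw : ∀ g : E →L[𝕜] 𝕜, Tendsto (fun i => g ((S i).symm u)) l (𝓝 (g w))) :
    IsBirkhoffOrthogonal 𝕜 v w := by
  obtain ⟨f, hf⟩ := exists_isNormingFunctional 𝕜 v
  exact hf.isBirkhoffOrthogonal (hf.apply_eq_zero_of_tendsto hF hv (hw f))

end NormingFunctional

theorem one_le_norm_of_isIdempotentElem {R : Type*} [NonUnitalNormedRing R] {p : R}
    (hp : IsIdempotentElem p) (hp₀ : p ≠ 0) : 1 ≤ ‖p‖ := by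
  refine one_le_of_le_mul_right₀ (norm_pos_iff.mpr hp₀) ?_
  calc ‖p‖ = ‖p * p‖ := by rw [hp.eq]
    _ ≤ ‖p‖ * ‖p‖ := norm_mul_le p p

theorem complement_projection_norm_one_general {𝕜 E ι : Type*} [RCLike 𝕜]
    [NormedAddCommGroup E] [NormedSpace 𝕜 E] {l : Filter ι} [l.NeBot]
    (hE : HasOpialDuality 𝕜 E l) (S : ι → E ≃ₗᵢ[𝕜] E)
    (P : E →L[𝕜] E) (hP : IsIdempotentElem P)
    (hWOT : ∀ (v : E) (f : E →L[𝕜] 𝕜), Tendsto (fun i => f (S i v)) l (𝓝 (f (P v))))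
    (hWOTinv : ∀ (v : E) (f : E →L[𝕜] 𝕜),
      Tendsto (fun i => f ((S i).symm v)) l (𝓝 (f (P v)))) :
    (∀ v w : E, v ∈ P.ker → w ∈ P.range → IsBirkhoffOrthogonal 𝕜 v w) ∧
    (∀ x : E, ‖x - P x‖ ≤ ‖x‖) ∧
    (P ≠ ContinuousLinearMap.id 𝕜 E → ‖ContinuousLinearMap.id 𝕜 E - P‖ = 1) := by
  have orthogonal (v w : E) (hv : P v = 0) (hw : ∃ u, P u = w) : IsBirkhoffOrthogonal 𝕜 v w := by
    obtain ⟨u, rfl⟩ := hw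
    exact hE.isBirkhoffOrthogonal_of_tendsto (fun g => by simpa [hv] using hWOT v g) (hWOTinv u)
  have contractive (x : E) : ‖x - P x‖ ≤ ‖x‖ := by
    have hPx : P (P x) = P x := DFunLike.congr_fun hP x
    have hker : P (x - P x) = 0 := by rw [map_sub, hPx, sub_self]
    simpa only [sub_add_cancel] using (orthogonal _ _ hker ⟨x, rfl⟩).norm_le_norm_add
  refine ⟨orthogonal, contractive, fun hne => le_antisymm ?_ ?_⟩
  · exact ContinuousLinearMap.opNorm_le_bound _ zero_le_one fun x => by simpa using contractive x
  · exact one_le_norm_of_isIdempotentElem hP.one_sub (sub_ne_zero.mpr hne.symm)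

/-- If `E` has unique norming functionals `J`, satisfies the Opial-type duality
property, and a sequence of invertible isometries `S n` together with its
inverses converges in the weak operator topology to an idempotent `P`, then
`ker P` is Birkhoff–James orthogonal to `range P`, `I - P` is a contraction,
and if `P ≠ I` then `‖I - P‖ = 1`. -/
theorem complement_projection_norm_one
    {E : Type*} [NormedAddCommGroup E] [NormedSpace ℝ E] [CompleteSpace E]
    (J : E → (E →L[ℝ] ℝ))
    (hJ : ∀ v : E, ‖J v‖ = ‖v‖ ∧ J v v = ‖v‖ ^ 2)
    (hJuniq : ∀ (v : E) (f : E →L[ℝ] ℝ), ‖f‖ = ‖v‖ → f v = ‖v‖ ^ 2 → f = J v)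
    (hOpial : ∀ x : ℕ → E,
      (∀ f : E →L[ℝ] ℝ, Tendsto (fun n => f (x n)) atTop (𝓝 0)) →
      ∀ v : E, Tendsto (fun n => J (x n) v) atTop (𝓝 0))
    (S : ℕ → (E ≃ₗᵢ[ℝ] E))
    (P : E →L[ℝ] E) (hP : P.comp P = P)
    (hWOT : ∀ (v : E) (f : E →L[ℝ] ℝ),
      Tendsto (fun n => f (S n v)) atTop (𝓝 (f (P v))))
    (hWOTinv : ∀ (v : E) (f : E →L[ℝ] ℝ),
      Tendsto (fun n => f ((S n).symm v)) atTop (𝓝 (f (P v)))) :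
    (∀ v w : E, P v = 0 → (∃ u, P u = w) → ∀ lam : ℝ, ‖v‖ ≤ ‖v + lam • w‖) ∧
    (∀ x : E, ‖x - P x‖ ≤ ‖x‖) ∧
    (P ≠ ContinuousLinearMap.id ℝ E → ‖ContinuousLinearMap.id ℝ E - P‖ = 1) :=
  complement_projection_norm_one_general
    (fun x f hx hf v => (hOpial x hx v).congr fun n => by
      rw [hJuniq _ _ (hf n).norm_eq (hf n).apply_self]) S P hP hWOT hWOTinv
end

section
/- For every ε > 0 there exist n ∈ ℕ and p ∈ [1, ∞) such that on ℝⁿ (functions Fin n → ℝ) equipped with the ℓ_p norm ‖f‖_p = (∑_i |f(i)|^p)^{1/p}, the mean projection M given by (M f)(i) = (1/n) ∑_j f(j) satisfies: there is a vector f with ‖f − M f‖_p > (2 − ε) ‖f‖_p; in particular the operator norm of I − M on ℓ_p(Fin n) exceeds 2 − ε. -/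
open scoped ENNReal

/-! Already `p = 1` works: on `n` points, the mean projection `M` spreads the mass of a unit vector
`e` evenly, so `e - M e` has one coordinate `1 - 1 / n` and `n - 1` coordinates `-1 / n`, and its
`ℓ_1` norm is `2 - 2 / n`. -/

section MeanProjection

/-- The mean projection on `ℓ_p(ι, E)`, as a bounded operator: it replaces a function on `ι` by the
constant function whose value is its average. For empty `ι` the space is trivial, so the junk
inverse of `0` does no harm. -/
noncomputable def meanProjection (p : ℝ≥0∞) [Fact (1 ≤ p)] (𝕜 ι E : Type*) [Fintype ι]
    [NormedField 𝕜] [NormedAddCommGroup E] [NormedSpace 𝕜 E] :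
    PiLp p (fun _ : ι => E) →L[𝕜] PiLp p (fun _ : ι => E) where
  toFun f := WithLp.toLp p fun _ => (Fintype.card ι : 𝕜)⁻¹ • ∑ j, f j
  map_add' f g := by ext; simp [Finset.sum_add_distrib]
  map_smul' c f := by ext; simp [← Finset.smul_sum, smul_comm c]
  cont := by fun_prop

variable {p : ℝ≥0∞} [Fact (1 ≤ p)] {𝕜 ι E : Type*} [Fintype ι] [NormedAddCommGroup E]

theorem meanProjection_apply [NormedField 𝕜] [NormedSpace 𝕜 E]
    (f : PiLp p (fun _ : ι => E)) (i : ι) :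
    meanProjection p 𝕜 ι E f i = (Fintype.card ι : 𝕜)⁻¹ • ∑ j, f j :=
  rfl

variable [DecidableEq ι]

theorem meanProjection_single_apply [NormedField 𝕜] [NormedSpace 𝕜 E] (i : ι) (v : E) (j : ι) :
    meanProjection p 𝕜 ι E (PiLp.single p i v) j = (Fintype.card ι : 𝕜)⁻¹ • v := by
  simp [meanProjection_apply]

variable [RCLike 𝕜] [NormedSpace 𝕜 E]

theorem norm_single_sub_meanProjection_single_apply_self (i : ι) (v : E) :
    ‖(PiLp.single p i v - meanProjection p 𝕜 ι E (PiLp.single p i v) :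
      PiLp p (fun _ : ι => E)) i‖ = (1 - 1 / Fintype.card ι) * ‖v‖ := by
  have one_le_card : (1 : ℝ) ≤ Fintype.card ι := mod_cast Fintype.card_pos_iff.mpr ⟨i⟩
  have weight_nonneg : (0 : ℝ) ≤ 1 - 1 / Fintype.card ι :=
    sub_nonneg.mpr (div_le_one_of_le₀ one_le_card (Nat.cast_nonneg _))
  calc
    _ = ‖((1 - 1 / Fintype.card ι : ℝ) : 𝕜) • v‖ := by
      simp [meanProjection_single_apply, sub_smul]
    _ = (1 - 1 / Fintype.card ι) * ‖v‖ := by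
      rw [norm_smul, RCLike.norm_of_nonneg weight_nonneg]

theorem norm_single_sub_meanProjection_single_apply_of_ne {i j : ι} (hji : j ≠ i) (v : E) :
    ‖(PiLp.single p i v - meanProjection p 𝕜 ι E (PiLp.single p i v) :
      PiLp p (fun _ : ι => E)) j‖ = 1 / Fintype.card ι * ‖v‖ := by
  simp [meanProjection_single_apply, hji, norm_smul]

theorem norm_single_sub_meanProjection_single_of_L1 (i : ι) (v : E) :
    ‖PiLp.single 1 i v - meanProjection 1 𝕜 ι E (PiLp.single 1 i v)‖ =
      (2 - 2 / Fintype.card ι) * ‖v‖ := by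
  set n := Fintype.card ι
  have one_le_card : 1 ≤ n := Fintype.card_pos_iff.mpr ⟨i⟩
  calc
    _ = (1 - 1 / n) * ‖v‖ + ∑ _j ∈ Finset.univ.erase i, 1 / n * ‖v‖ := by
      rw [PiLp.norm_eq_of_L1, ← Finset.add_sum_erase _ _ (Finset.mem_univ i),
        norm_single_sub_meanProjection_single_apply_self]
      congr 1
      exact Finset.sum_congr rfl fun j hj =>
        norm_single_sub_meanProjection_single_apply_of_ne (Finset.ne_of_mem_erase hj) v
    _ = (1 - 1 / n) * ‖v‖ + (n - 1) * (1 / n * ‖v‖) := by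
      rw [Finset.sum_const, Finset.card_erase_of_mem (Finset.mem_univ i), Finset.card_univ,
        nsmul_eq_mul, Nat.cast_pred one_le_card]
    _ = (2 - 2 / n) * ‖v‖ := by
      field_simp
      ring

end MeanProjection

/-- The norm of the complement of the mean projection on `ℓ_p(Fin n)` can be
made arbitrarily close to `2` by choosing `n` and `p < ∞` large. -/
theorem complement_of_mean_projection_norm_close_to_two :
    ∀ ε : ℝ, 0 < ε →
      ∃ (n : ℕ) (p : ℝ≥0∞) (_ : Fact (1 ≤ p)), p ≠ ∞ ∧
        (∀ f : PiLp p (fun _ : Fin n => ℝ),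
          ‖f‖ = (∑ i, |f i| ^ p.toReal) ^ (1 / p.toReal)) ∧
        ∃ M : PiLp p (fun _ : Fin n => ℝ) →L[ℝ] PiLp p (fun _ : Fin n => ℝ),
          (∀ (f : PiLp p (fun _ : Fin n => ℝ)) (i : Fin n),
            M f i = (∑ j, f j) / n) ∧
          (∃ f : PiLp p (fun _ : Fin n => ℝ),
            ‖f - M f‖ > (2 - ε) * ‖f‖) ∧
          ‖ContinuousLinearMap.id ℝ (PiLp p (fun _ : Fin n => ℝ)) - M‖ > 2 - ε := by
  intro ε hε
  obtain ⟨m, hm⟩ := exists_nat_one_div_lt (half_pos hε)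
  let e : PiLp 1 (fun _ : Fin (m + 1) => ℝ) := PiLp.single 1 0 1
  let M := meanProjection 1 ℝ (Fin (m + 1)) ℝ
  have norm_complement : (2 - ε) * ‖e‖ < ‖e - M e‖ := by
    have norm_e : ‖e‖ = 1 := by simp [e]
    have two_div_succ_lt : 2 * (1 / ((m : ℝ) + 1)) < ε := by linarith
    rw [norm_e, norm_single_sub_meanProjection_single_of_L1]
    simpa [div_eq_mul_inv] using two_div_succ_lt
  refine ⟨m + 1, 1, inferInstance, ENNReal.one_ne_top, fun f => ?_, M, fun f i => ?_,
    ⟨e, norm_complement⟩, ?_⟩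
  · exact PiLp.norm_eq_sum (by simp) f
  · simp [M, meanProjection_apply, div_eq_inv_mul]
  · exact lt_of_mul_lt_mul_right
      (norm_complement.trans_le ((ContinuousLinearMap.id ℝ _ - M).le_opNorm e)) (norm_nonneg e)
end
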